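/- Let β > 0, α ∈ ℝ, and let 0 < q_N ≤ p_N ≤ 1 satisfy N·p_N → ∞ and q_N/p_N → a ∈ (0,1] with |α|·a ≤ β. Let γ_N, κ_N → 0 and suppose for each even N the edge variables (ε_N, δ_N) belong to E_N^*(γ_N, κ_N, p_N, q_N). If β + α·a > 2 and α·a > 0, then the distribution of the group opinion vector m under the Gibbs measure μ_{N,α,β,ε_N,δ_N} converges weakly, as N → ∞ through even N, to the mixture of two Dirac measures (1/2)·(δ_{(z*((β+αa)/2), z*((β+αa)/2))} + δ_{(−z*((β+αa)/2), −z*((β+αa)/2))}), where z*(b) is the largest solution of z = tanh(b·z). -/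

import Mathlib

/-!
On `E_N^*` the diluted Hamiltonian differs from the fully connected block Hamiltonian `H̃` with
couplings `β` and `λ = α a` by at most `N ρ_N` with `ρ_N → 0`, uniformly in the configuration
(`abs_Hdil_sub_Htilde_le`). It therefore suffices to show that, for `H̃`, magnetizations away from
`±(z*, z*)` have exponentially small probability; the weights `1/2` then come from the exact
invariance of the diluted model under the global spin flip (`gibbsAvg_eq_even`).

With `N = 2 n`, `b = (β + λ) / 2` and `(x, y) = (m₁, m₂)` one has
`-H̃ = n (b (x² + y²) / 2 - λ (x - y)² / 4)`. Put `h(x) = log (2 cosh (b x)) - b x² / 2`.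

* Since `λ ≤ β`, `-H̃` is convex in `(x, y)`, and bounding it below by its tangent plane at
  `(z*, z*)` gives a partition function of at least `exp (2 n h(z*))` (`exp_le_partition`).
* The Chernoff bound with tilts `(b x, b y)` shows that the configurations of magnetization
  `(x, y)` contribute at most `exp (n (h(x) + h(y) - λ (x - y)² / 4))`, and there are at most
  `(n + 1)²` such values (`restricted_partition_le`).

As `h' = b (tanh (b x) - x)`, the function `h` has its maxima exactly at `± z*` (`cwH_lt`), and the
term `-λ (x - y)² / 4` leaves only `±(z*, z*)`. Compactness gives a uniform gap `c` on any closed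
part of `[-1, 1]²` avoiding these points (`exists_gap`), so its probability is at most
`(n + 1)² exp (2 N ρ_N - n c) → 0` (`gibbsProb_le`).
-/

open Finset Filter

noncomputable section

/-- The spin value of a Boolean: `+1` or `-1`. -/
def spin (b : Bool) : ℝ := if b then 1 else -1

/-- `i ∼ j` : the sites `i` and `j` belong to the same block. -/
def sim {N : ℕ} (S : Finset (Fin N)) (i j : Fin N) : Prop :=
  (i ∈ S ∧ j ∈ S) ∨ (i ∉ S ∧ j ∉ S)

instance {N : ℕ} (S : Finset (Fin N)) (i j : Fin N) : Decidable (sim S i j) := by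
  unfold sim; infer_instance

/-- Magnetization of the first block. -/
def m1 {N : ℕ} (S : Finset (Fin N)) (σ : Fin N → Bool) : ℝ :=
  (2 / N) * ∑ i ∈ S, spin (σ i)

/-- Magnetization of the second block. -/
def m2 {N : ℕ} (S : Finset (Fin N)) (σ : Fin N → Bool) : ℝ :=
  (2 / N) * ∑ i ∈ Sᶜ, spin (σ i)

/-- `L⁺_b(σ)` : ordered pairs in the same block with aligned spins. -/
def Lbp {N : ℕ} (S : Finset (Fin N)) (σ : Fin N → Bool) : Finset (Fin N × Fin N) :=
  Finset.univ.filter fun ij => sim S ij.1 ij.2 ∧ spin (σ ij.1) * spin (σ ij.2) = 1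

/-- `L⁺_nb(σ)` : ordered pairs in different blocks with aligned spins. -/
def Lnbp {N : ℕ} (S : Finset (Fin N)) (σ : Fin N → Bool) : Finset (Fin N × Fin N) :=
  Finset.univ.filter fun ij => ¬ sim S ij.1 ij.2 ∧ spin (σ ij.1) * spin (σ ij.2) = 1

/-- `L⁻_nb(σ)` : ordered pairs in different blocks with unaligned spins. -/
def Lnbm {N : ℕ} (S : Finset (Fin N)) (σ : Fin N → Bool) : Finset (Fin N × Fin N) :=
  Finset.univ.filter fun ij => ¬ sim S ij.1 ij.2 ∧ spin (σ ij.1) * spin (σ ij.2) = -1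

/-- The fully connected block Hamiltonian `H̃_{N,λ,β}`. -/
def Htilde {N : ℕ} (S : Finset (Fin N)) (lam β : ℝ) (σ : Fin N → Bool) : ℝ :=
  -(β / (2 * N)) * ∑ i, ∑ j, (if sim S i j then spin (σ i) * spin (σ j) else 0)
    - (lam / (2 * N)) * ∑ i, ∑ j, (if ¬ sim S i j then spin (σ i) * spin (σ j) else 0)

/-- The diluted Hamiltonian `H_{N,α,β,ε,δ}`. -/
def Hdil {N : ℕ} (S : Finset (Fin N)) (α β p : ℝ) (ε δ : Fin N → Fin N → ℝ)
    (σ : Fin N → Bool) : ℝ :=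
  -(β / (2 * N * p)) * ∑ i, ∑ j, (if sim S i j then ε i j * (spin (σ i) * spin (σ j)) else 0)
    - (α / (2 * N * p)) * ∑ i, ∑ j, (if ¬ sim S i j then δ i j * (spin (σ i) * spin (σ j)) else 0)

/-- The set `E_N^*(γ, κ, p, q)` of good edge configurations. -/
def Estar {N : ℕ} (S : Finset (Fin N)) (γ κ p q : ℝ) (ε δ : Fin N → Fin N → ℝ) : Prop :=
  ∀ σ : Fin N → Bool,
    |(∑ ij ∈ Lbp S σ, ε ij.1 ij.2) - p * (Lbp S σ).card| ≤ γ * p * (Lbp S σ).card ∧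
    (0 ≤ m1 S σ * m2 S σ →
      |(∑ ij ∈ Lnbp S σ, δ ij.1 ij.2) - q * (Lnbp S σ).card| ≤ κ * q * (Lnbp S σ).card) ∧
    (m1 S σ * m2 S σ < 0 →
      |(∑ ij ∈ Lnbm S σ, δ ij.1 ij.2) - q * (Lnbm S σ).card| ≤ κ * q * (Lnbm S σ).card)

/-- The probability of an edge configuration under independent Bernoulli edges:
within-block edges are present with probability `p`, between-block edges with probability `q`. -/
def graphWeight {N : ℕ} (S : Finset (Fin N)) (p q : ℝ)
    (ed : (Fin N → Fin N → Bool) × (Fin N → Fin N → Bool)) : ℝ :=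
  (∏ i, ∏ j, if sim S i j then (if ed.1 i j then p else 1 - p) else 1) *
  (∏ i, ∏ j, if ¬ sim S i j then (if ed.2 i j then q else 1 - q) else 1)

open Classical in
/-- The probability that the i.i.d. Bernoulli edge variables do not lie in `E_N^*`. -/
def badProb (N : ℕ) (S : Finset (Fin N)) (γ κ p q : ℝ) : ℝ :=
  ∑ ed : (Fin N → Fin N → Bool) × (Fin N → Fin N → Bool),
    if ¬ Estar S γ κ p q (fun i j => if ed.1 i j then 1 else 0)
        (fun i j => if ed.2 i j then 1 else 0) then
      graphWeight S p q ed
    else 0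

/-- The filter of `N → ∞` through even `N`. -/
def evenAtTop : Filter ℕ := Filter.atTop ⊓ Filter.principal {N | Even N}

/-- A bounded continuous test function on `ℝ²`. -/
def IsBddCont (f : ℝ × ℝ → ℝ) : Prop := Continuous f ∧ ∃ M, ∀ x, |f x| ≤ M

/-- Expectation of `g` under the Gibbs measure with Hamiltonian `H`. -/
def gibbsAvg {N : ℕ} (H : (Fin N → Bool) → ℝ) (g : (Fin N → Bool) → ℝ) : ℝ :=
  (∑ σ : Fin N → Bool, Real.exp (-H σ) * g σ) / ∑ σ : Fin N → Bool, Real.exp (-H σ)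

open Classical in
/-- The probability of `A ⊆ ℝ²` under the pushforward of the Gibbs measure of `H`
by the group opinion vector `m = (m₁, m₂)`. -/
def gibbsProb {N : ℕ} (H : (Fin N → Bool) → ℝ) (S : Finset (Fin N)) (A : Set (ℝ × ℝ)) : ℝ :=
  (∑ σ : Fin N → Bool, if (m1 S σ, m2 S σ) ∈ A then Real.exp (-H σ) else 0) /
    ∑ σ : Fin N → Bool, Real.exp (-H σ)

open Classical in
/-- The probability of `A ⊆ ℝ²` under the pushforward of the uniform measure on `{-1,1}^N`
by the group opinion vector `m = (m₁, m₂)`. -/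
def unifProb (N : ℕ) (S : Finset (Fin N)) (A : Set (ℝ × ℝ)) : ℝ :=
  (∑ σ : Fin N → Bool, if (m1 S σ, m2 S σ) ∈ A then (1 : ℝ) else 0) / 2 ^ N

/-- `z` is the largest solution of the Curie-Weiss equation `z = tanh (b z)`. -/
def IsLargestCW (b z : ℝ) : Prop :=
  z = Real.tanh (b * z) ∧ ∀ y : ℝ, y = Real.tanh (b * y) → y ≤ z

/-- Extended-real logarithm, `⊥` for nonpositive arguments. -/
def elog (r : ℝ) : EReal := if r ≤ 0 then ⊥ else ((Real.log r : ℝ) : EReal)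

/-- Cramér entropy `I` (with `I = ∞` outside `[-1,1]` and the convention `0 log 0 = 0`). -/
def Ient (x : ℝ) : EReal :=
  if |x| ≤ 1 then
    (((1 / 2) * (1 + x) * Real.log (1 + x) + (1 / 2) * (1 - x) * Real.log (1 - x) : ℝ) : EReal)
  else ⊤

/-- The rate function `J(x) = ½ I(2x₁) + ½ I(2x₂)`. -/
def Jrate (x : ℝ × ℝ) : EReal :=
  ((1 / 2 : ℝ) : EReal) * Ient (2 * x.1) + ((1 / 2 : ℝ) : EReal) * Ient (2 * x.2)

/-- `F_m(x) = ½ (β x₁² + β x₂² + 2 λ x₁ x₂)`. -/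
def Fm (β lam : ℝ) (x : ℝ × ℝ) : ℝ :=
  (1 / 2) * (β * x.1 ^ 2 + β * x.2 ^ 2 + 2 * lam * x.1 * x.2)

/-- The rate function `J_m(x) = sup_y [F_m(y) − J(y)] − [F_m(x) − J(x)]`. -/
def Jm (β lam : ℝ) (x : ℝ × ℝ) : EReal :=
  (⨆ y : ℝ × ℝ, ((Fm β lam y : ℝ) : EReal) - Jrate y) - (((Fm β lam x : ℝ) : EReal) - Jrate x)

end

noncomputable section

/-! ### The one-dimensional variational function -/

/-- The Curie-Weiss free energy functional `h_b(x) = log (2 cosh (b x)) - b x² / 2`. It is the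
exponential rate, per site of a block, of the Chernoff bound with tilt `b x` for the contribution
of a block of magnetization `x`. -/
def cwH (b x : ℝ) : ℝ := Real.log (2 * Real.cosh (b * x)) - b * x ^ 2 / 2

lemma cwH_neg (b x : ℝ) : cwH b (-x) = cwH b x := by
  simp [cwH, Real.cosh_neg]

lemma hasDerivAt_tanh (x : ℝ) : HasDerivAt Real.tanh (1 / Real.cosh x ^ 2) x := by
  have hc : Real.cosh x ≠ 0 := (Real.cosh_pos x).ne'
  have h := (Real.hasDerivAt_sinh x).div (Real.hasDerivAt_cosh x) hc
  have e : (Real.sinh / Real.cosh) = Real.tanh := by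
    funext y; simp [Real.tanh_eq_sinh_div_cosh]
  rw [e] at h
  refine h.congr_deriv ?_
  rw [← Real.cosh_sq_sub_sinh_sq x]
  ring

/-- `tanh (b x) - x` is, up to the factor `b`, the derivative of `cwH b`. -/
lemma hasDerivAt_cwH (b x : ℝ) :
    HasDerivAt (cwH b) (b * (Real.tanh (b * x) - x)) x := by
  have hc : Real.cosh (b * x) ≠ 0 := (Real.cosh_pos _).ne'
  have h1 : HasDerivAt (fun y : ℝ => b * y) b x := by
    simpa using (hasDerivAt_id x).const_mul b
  have h2 := ((h1.cosh).const_mul 2).log (by positivity)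
  have h3 := ((hasDerivAt_pow 2 x).const_mul b).div_const 2
  refine (h2.sub h3).congr_deriv ?_
  rw [Real.tanh_eq_sinh_div_cosh]
  field_simp
  push_cast
  ring

lemma hasDerivAt_tanhGap (b x : ℝ) :
    HasDerivAt (fun y => Real.tanh (b * y) - y) (b / Real.cosh (b * x) ^ 2 - 1) x := by
  have h1 : HasDerivAt (fun y : ℝ => b * y) b x := by
    simpa using (hasDerivAt_id x).const_mul b
  have h2 := (hasDerivAt_tanh (b * x)).comp x h1
  refine (h2.sub (hasDerivAt_id x)).congr_deriv ?_
  ring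

lemma continuous_tanhGap (b : ℝ) : Continuous (fun y => Real.tanh (b * y) - y) :=
  continuous_iff_continuousAt.2 fun x => (hasDerivAt_tanhGap b x).continuousAt

lemma strictConcaveOn_tanhGap {b : ℝ} (hb : 0 < b) :
    StrictConcaveOn ℝ (Set.Ici 0) (fun y => Real.tanh (b * y) - y) := by
  refine StrictAntiOn.strictConcaveOn_of_deriv (convex_Ici 0)
    (continuous_tanhGap b).continuousOn ?_
  intro x hx y hy hxy
  rw [interior_Ici, Set.mem_Ioi] at hx hy
  rw [(hasDerivAt_tanhGap b x).deriv, (hasDerivAt_tanhGap b y).deriv]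
  have h : Real.cosh (b * x) < Real.cosh (b * y) := by
    rw [Real.cosh_lt_cosh, abs_of_pos (by positivity), abs_of_pos (by positivity)]
    exact mul_lt_mul_of_pos_left hxy hb
  have := Real.cosh_pos (b * x)
  gcongr

lemma tanhGap_neg_of_ge_one (b : ℝ) {x : ℝ} (hx : 1 ≤ x) : Real.tanh (b * x) - x < 0 := by
  linarith [Real.tanh_lt_one (b * x)]

/-- Supercritical inverse temperature: the largest solution is positive. -/
lemma IsLargestCW.pos {b z : ℝ} (hb : 1 < b) (hz : IsLargestCW b z) : 0 < z := by
  have hd := hasDerivAt_tanhGap b 0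
  have hpos : 0 < b / Real.cosh (b * 0) ^ 2 - 1 := by simp; linarith
  have hev := (hasDerivAt_iff_tendsto_slope.1 hd).eventually (lt_mem_nhds hpos)
  have hev' : ∀ᶠ y in nhdsWithin (0 : ℝ) (Set.Ioi 0),
      0 < slope (fun y => Real.tanh (b * y) - y) 0 y :=
    hev.filter_mono (nhdsWithin_mono _ (fun y hy => ne_of_gt hy))
  obtain ⟨y, hy, hy0⟩ := (hev'.and self_mem_nhdsWithin).exists
  rw [slope_def_field] at hy
  simp only [mul_zero, Real.tanh_zero, sub_zero] at hy
  have hgap : 0 < Real.tanh (b * y) - y := by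
    by_contra hcon
    exact absurd hy (not_lt.2 (div_nonpos_of_nonpos_of_nonneg (not_lt.1 hcon) hy0.le))
  have hy1 : y ≤ 1 := by
    by_contra hcon
    linarith [tanhGap_neg_of_ge_one b (not_le.1 hcon).le]
  obtain ⟨w, hw, hw0⟩ := intermediate_value_Icc' hy1 (continuous_tanhGap b).continuousOn
    (show (0 : ℝ) ∈ Set.Icc (Real.tanh (b * 1) - 1) (Real.tanh (b * y) - y) from
      ⟨(tanhGap_neg_of_ge_one b le_rfl).le, hgap.le⟩)
  have := hz.2 w (by simp only at hw0; linarith)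
  linarith [hw.1]

/-- `cwH b` has its only maxima at `± z*(b)`: its derivative is positive on `(0, z*)` by strict
concavity of `tanh` on `[0, ∞)`, and negative beyond `z*`, where it has no zero. -/
lemma cwH_lt {b z x : ℝ} (hb : 1 < b) (hz : IsLargestCW b z) (hx : x ≠ z) (hx' : x ≠ -z) :
    cwH b x < cwH b z := by
  have hz0 := hz.pos hb
  have hb0 : 0 < b := by linarith
  have hcont : Continuous (cwH b) :=
    continuous_iff_continuousAt.2 fun x => (hasDerivAt_cwH b x).continuousAt
  have hgz : Real.tanh (b * z) - z = 0 := by linarith [hz.1]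
  have hmono : StrictMonoOn (cwH b) (Set.Icc 0 z) := by
    refine strictMonoOn_of_deriv_pos (convex_Icc 0 z) hcont.continuousOn fun y hy => ?_
    rw [interior_Icc] at hy
    rw [(hasDerivAt_cwH b y).deriv]
    refine mul_pos hb0 ?_
    have h := (strictConcaveOn_tanhGap hb0).2 (Set.mem_Ici.2 le_rfl) (Set.mem_Ici.2 hz0.le)
      hz0.ne (show 0 < 1 - y / z by rw [sub_pos, div_lt_one hz0]; exact hy.2)
      (show 0 < y / z from div_pos hy.1 hz0) (by ring)
    simp only [mul_zero, Real.tanh_zero, smul_eq_mul, hgz, sub_zero, add_zero, zero_add] at h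
    rwa [div_mul_cancel₀ _ hz0.ne'] at h
  have hanti : StrictAntiOn (cwH b) (Set.Ici z) := by
    refine strictAntiOn_of_deriv_neg (convex_Ici z) hcont.continuousOn fun y hy => ?_
    rw [interior_Ici, Set.mem_Ioi] at hy
    rw [(hasDerivAt_cwH b y).deriv]
    refine mul_neg_of_pos_of_neg hb0 ?_
    by_contra hcon
    have hcon := not_lt.1 hcon
    have hy1 : y ≤ 1 := by
      by_contra h
      linarith [tanhGap_neg_of_ge_one b (not_le.1 h).le]
    obtain ⟨w, hw, hw0⟩ := intermediate_value_Icc' hy1 (continuous_tanhGap b).continuousOn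
      (show (0 : ℝ) ∈ Set.Icc (Real.tanh (b * 1) - 1) (Real.tanh (b * y) - y) from
        ⟨(tanhGap_neg_of_ge_one b le_rfl).le, hcon⟩)
    have := hz.2 w (by simp only at hw0; linarith)
    linarith [hw.1]
  have key : ∀ y : ℝ, 0 ≤ y → y ≠ z → cwH b y < cwH b z := by
    intro y hy hyz
    rcases lt_or_gt_of_ne hyz with h | h
    · exact hmono ⟨hy, h.le⟩ ⟨hz0.le, le_rfl⟩ h
    · exact hanti (Set.mem_Ici.2 le_rfl) (Set.mem_Ici.2 h.le) h
  rcases le_total 0 x with h | h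
  · exact key x h hx
  · rw [← cwH_neg b x]
    exact key (-x) (by linarith) (fun e => hx' (by linarith))

lemma cwH_le {b z : ℝ} (hb : 1 < b) (hz : IsLargestCW b z) (x : ℝ) : cwH b x ≤ cwH b z := by
  by_cases h : x = z
  · rw [h]
  by_cases h' : x = -z
  · rw [h', cwH_neg]
  exact (cwH_lt hb hz h h').le

lemma continuous_cwH (b : ℝ) : Continuous (cwH b) :=
  continuous_iff_continuousAt.2 fun x => (hasDerivAt_cwH b x).continuousAt

/-- The coupling term `-λ (x - y)² / 4` selects, among the maxima of the uncoupled functional,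
the two with equal coordinates; off these two points there is a uniform gap on compacts. -/
lemma exists_gap {b lam z : ℝ} (hb : 1 < b) (hlam : 0 < lam) (hz : IsLargestCW b z)
    {K : Set (ℝ × ℝ)} (hK : IsCompact K) (h1 : (z, z) ∉ K) (h2 : (-z, -z) ∉ K) :
    ∃ c > 0, ∀ x ∈ K,
      cwH b x.1 + cwH b x.2 - lam / 4 * (x.1 - x.2) ^ 2 ≤ 2 * cwH b z - c := by
  rcases K.eq_empty_or_nonempty with rfl | hne
  · exact ⟨1, one_pos, by simp⟩
  have hcont : Continuous fun x : ℝ × ℝ =>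
      cwH b x.1 + cwH b x.2 - lam / 4 * (x.1 - x.2) ^ 2 := by
    have := continuous_cwH b
    fun_prop
  obtain ⟨w, hw, hmax⟩ := hK.exists_isMaxOn hne hcont.continuousOn
  refine ⟨2 * cwH b z - (cwH b w.1 + cwH b w.2 - lam / 4 * (w.1 - w.2) ^ 2), ?_, fun x hx => ?_⟩
  · have hz0 := hz.pos hb
    have l1 := cwH_le hb hz w.1
    have l2 := cwH_le hb hz w.2
    have l3 : 0 ≤ lam / 4 * (w.1 - w.2) ^ 2 := by positivity
    by_contra hcon
    have e1 : cwH b w.1 = cwH b z := by linarith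
    have e2 : cwH b w.2 = cwH b z := by linarith
    have e3 : lam / 4 * (w.1 - w.2) ^ 2 = 0 := by linarith
    have e4 : w.2 = w.1 := by
      rcases mul_eq_zero.1 e3 with h | h
      · linarith
      · have := pow_eq_zero_iff (two_ne_zero) |>.1 h
        linarith
    have e5 : w = (w.1, w.1) := by ext <;> simp [e4]
    by_cases hA : w.1 = z
    · exact h1 (by rw [e5, hA] at hw; exact hw)
    · by_cases hB : w.1 = -z
      · exact h2 (by rw [e5, hB] at hw; exact hw)
      · exact absurd e1 (cwH_lt hb hz hA hB).ne
  · have := hmax hx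
    simp only [Set.mem_ofPred_eq] at this
    linarith

/-! ### Spin sums and the generating function -/

lemma spin_eq (b : Bool) : spin b = 1 ∨ spin b = -1 := by cases b <;> simp [spin]

lemma spin_not (b : Bool) : spin (!b) = -spin b := by cases b <;> simp [spin]

lemma spin_mul_eq (b c : Bool) : spin b * spin c = 1 ∨ spin b * spin c = -1 := by
  cases b <;> cases c <;> simp [spin]

/-- Joint exponential generating function of the two block sums under counting measure. -/
lemma sum_exp_blocks {N : ℕ} (S : Finset (Fin N)) (s t : ℝ) :
    ∑ σ : Fin N → Bool, Real.exp (s * ∑ i ∈ S, spin (σ i) + t * ∑ i ∈ Sᶜ, spin (σ i)) =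
      (2 * Real.cosh s) ^ S.card * (2 * Real.cosh t) ^ Sᶜ.card := by
  have h1 : ∀ σ : Fin N → Bool,
      Real.exp (s * ∑ i ∈ S, spin (σ i) + t * ∑ i ∈ Sᶜ, spin (σ i)) =
        ∏ i, Real.exp ((if i ∈ S then s else t) * spin (σ i)) := by
    intro σ
    rw [← Real.exp_sum, ← Finset.sum_add_sum_compl S, Finset.mul_sum, Finset.mul_sum]
    congr 2
    · exact Finset.sum_congr rfl fun i hi => by simp [hi]
    · exact Finset.sum_congr rfl fun i hi => by simp [Finset.mem_compl.1 hi]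
  have h2 : ∀ c : ℝ, ∑ b : Bool, Real.exp (c * spin b) = 2 * Real.cosh c := by
    intro c
    rw [Fintype.sum_bool, Real.cosh_eq]
    simp [spin]
    ring
  simp_rw [h1]
  rw [← Fintype.prod_sum (fun (i : Fin N) (b : Bool) =>
    Real.exp ((if i ∈ S then s else t) * spin b))]
  simp_rw [h2]
  rw [← Finset.prod_mul_prod_compl S]
  congr 1
  · rw [Finset.prod_congr rfl (g := fun _ => 2 * Real.cosh s), Finset.prod_const]
    intro i hi; simp [hi]
  · rw [Finset.prod_congr rfl (g := fun _ => 2 * Real.cosh t), Finset.prod_const]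
    intro i hi; simp [Finset.mem_compl.1 hi]

lemma sum_sim {N : ℕ} (S : Finset (Fin N)) (a : Fin N → ℝ) :
    ∑ i, ∑ j, (if sim S i j then a i * a j else 0) =
      (∑ i ∈ S, a i) ^ 2 + (∑ i ∈ Sᶜ, a i) ^ 2 := by
  rw [← Finset.sum_add_sum_compl S, sq, sq, Finset.sum_mul_sum, Finset.sum_mul_sum]
  congr 1
  · refine Finset.sum_congr rfl fun i hi => ?_
    rw [← Finset.sum_filter]
    exact Finset.sum_congr (by ext j; simp [sim, hi]) fun _ _ => rfl
  · refine Finset.sum_congr rfl fun i hi => ?_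
    rw [← Finset.sum_filter]
    exact Finset.sum_congr (by ext j; simp [sim, Finset.mem_compl.1 hi]) fun _ _ => rfl

lemma sum_not_sim {N : ℕ} (S : Finset (Fin N)) (a : Fin N → ℝ) :
    ∑ i, ∑ j, (if ¬ sim S i j then a i * a j else 0) =
      2 * ((∑ i ∈ S, a i) * ∑ i ∈ Sᶜ, a i) := by
  rw [← Finset.sum_add_sum_compl S, two_mul]
  congr 1
  · rw [Finset.sum_mul_sum]
    refine Finset.sum_congr rfl fun i hi => ?_
    rw [← Finset.sum_filter]
    exact Finset.sum_congr (by ext j; simp [sim, hi]) fun _ _ => rfl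
  · rw [mul_comm, Finset.sum_mul_sum]
    refine Finset.sum_congr rfl fun i hi => ?_
    rw [← Finset.sum_filter]
    exact Finset.sum_congr (by ext j; simp [sim, Finset.mem_compl.1 hi]) fun _ _ => rfl

lemma neg_Htilde_eq {N : ℕ} (S : Finset (Fin N)) (lam β : ℝ) (σ : Fin N → Bool) :
    -Htilde S lam β σ =
      β / (2 * N) * ((∑ i ∈ S, spin (σ i)) ^ 2 + (∑ i ∈ Sᶜ, spin (σ i)) ^ 2) +
      lam / (2 * N) * (2 * ((∑ i ∈ S, spin (σ i)) * ∑ i ∈ Sᶜ, spin (σ i))) := by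
  unfold Htilde
  rw [sum_sim S (fun i => spin (σ i)), sum_not_sim S (fun i => spin (σ i))]
  ring

/-! ### Comparison of the diluted and the fully connected Hamiltonian -/

/-- Splitting a signed sum as twice its positive part minus the unsigned sum (or the unsigned sum
minus twice its negative part) turns control of the edge counts into control of the energy. -/
lemma abs_signed_sum_sub_le {ι : Type*} [Fintype ι] (P : ι → Prop) [DecidablePred P]
    (w s : ι → ℝ) (hs : ∀ i, s i = 1 ∨ s i = -1) {p γ M : ℝ} (hp : 0 ≤ p)
    (hM : (Fintype.card ι : ℝ) ≤ M)
    (h0 : |∑ i with P i, w i - p * ((univ.filter fun i => P i).card : ℝ)| ≤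
      γ * p * ((univ.filter fun i => P i).card : ℝ))
    (h1 : |∑ i with P i ∧ s i = 1, w i - p * ((univ.filter fun i => P i ∧ s i = 1).card : ℝ)| ≤
        γ * p * ((univ.filter fun i => P i ∧ s i = 1).card : ℝ) ∨
      |∑ i with P i ∧ s i = -1, w i - p * ((univ.filter fun i => P i ∧ s i = -1).card : ℝ)| ≤
        γ * p * ((univ.filter fun i => P i ∧ s i = -1).card : ℝ)) :
    |∑ i, (if P i then w i * s i else 0) - p * ∑ i, (if P i then s i else 0)| ≤
      3 * |γ| * p * M := by
  have hcard : ∀ F : Finset ι, γ * p * (F.card : ℝ) ≤ |γ| * p * M := by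
    intro F
    have hF : (F.card : ℝ) ≤ M := le_trans (by exact_mod_cast Finset.card_le_univ F) hM
    have : γ ≤ |γ| := le_abs_self γ
    have : (0 : ℝ) ≤ F.card := Nat.cast_nonneg _
    gcongr
  have hD : ∀ F : Finset ι, ∑ i ∈ F, w i - p * (F.card : ℝ) = ∑ i ∈ F, (w i - p) := by
    intro F
    rw [Finset.sum_sub_distrib, Finset.sum_const, nsmul_eq_mul, mul_comm]
  have hL : ∑ i, (if P i then w i * s i else 0) - p * ∑ i, (if P i then s i else 0) =
      ∑ i, (if P i then (w i - p) * s i else 0) := by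
    rw [Finset.mul_sum, ← Finset.sum_sub_distrib]
    refine Finset.sum_congr rfl fun i _ => ?_
    split_ifs <;> ring
  rw [hL]
  have b0 := h0.trans (hcard _)
  rw [hD, Finset.sum_filter] at b0
  rcases h1 with h1 | h1
  · have b1 := h1.trans (hcard _)
    rw [hD, Finset.sum_filter] at b1
    have e : ∑ i, (if P i then (w i - p) * s i else 0) =
        2 * ∑ i, (if P i ∧ s i = 1 then w i - p else 0) - ∑ i, (if P i then w i - p else 0) := by
      rw [Finset.mul_sum, ← Finset.sum_sub_distrib]
      refine Finset.sum_congr rfl fun i _ => ?_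
      by_cases hP : P i
      · rcases hs i with h | h <;> norm_num [hP, h]
        ring
      · simp [hP]
    rw [e]
    rw [abs_le] at b0 b1 ⊢
    constructor <;> linarith [b0.1, b0.2, b1.1, b1.2]
  · have b1 := h1.trans (hcard _)
    rw [hD, Finset.sum_filter] at b1
    have e : ∑ i, (if P i then (w i - p) * s i else 0) =
        ∑ i, (if P i then w i - p else 0) - 2 * ∑ i, (if P i ∧ s i = -1 then w i - p else 0) := by
      rw [Finset.mul_sum, ← Finset.sum_sub_distrib]
      refine Finset.sum_congr rfl fun i _ => ?_
      by_cases hP : P i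
      · rcases hs i with h | h <;> norm_num [hP, h]
        ring
      · simp [hP]
    rw [e]
    rw [abs_le] at b0 b1 ⊢
    constructor <;> linarith [b0.1, b0.2, b1.1, b1.2]

lemma abs_not_sim_sum_le {N : ℕ} (S : Finset (Fin N)) (σ : Fin N → Bool) :
    |∑ i, ∑ j, (if ¬ sim S i j then spin (σ i) * spin (σ j) else 0)| ≤ (N : ℝ) ^ 2 := by
  have h : ∀ i j, |(if ¬ sim S i j then spin (σ i) * spin (σ j) else 0)| ≤ 1 := by
    intro i j
    split_ifs
    · simp
    · rcases spin_mul_eq (σ i) (σ j) with h | h <;> simp [h]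
  calc _ ≤ ∑ i, |∑ j, (if ¬ sim S i j then spin (σ i) * spin (σ j) else 0)| :=
        Finset.abs_sum_le_sum_abs _ _
    _ ≤ ∑ i : Fin N, ∑ j : Fin N, (1 : ℝ) :=
        Finset.sum_le_sum fun i _ => (Finset.abs_sum_le_sum_abs _ _).trans
          (Finset.sum_le_sum fun j _ => h i j)
    _ = (N : ℝ) ^ 2 := by simp [sq]

/-- On `E_N^*` the diluted Hamiltonian differs from the fully connected one with between-block
coupling `α a` by `o(N)`, uniformly in the configuration. The configuration `σ ≡ +1` controls the
total edge counts. -/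
lemma abs_Hdil_sub_Htilde_le {N : ℕ} (hN : 0 < N) (S : Finset (Fin N)) {α β a p q γ κ : ℝ}
    (hβ : 0 < β) (hq : 0 < q) (hqp : q ≤ p) (ε δ : Fin N → Fin N → ℝ)
    (hE : Estar S γ κ p q ε δ) (σ : Fin N → Bool) :
    |Hdil S α β p ε δ σ - Htilde S (α * a) β σ| ≤
      N * ((3 * β * |γ| + 3 * |α| * |κ| * (q / p) + |α| * |q / p - a|) / 2) := by
  have hp : 0 < p := hq.trans_le hqp
  have hN' : (0 : ℝ) < N := by exact_mod_cast hN
  have hM : (Fintype.card (Fin N × Fin N) : ℝ) ≤ (N : ℝ) ^ 2 := by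
    simp [sq]
  obtain ⟨t1, t2, -⟩ := hE fun _ => true
  obtain ⟨u1, u2, u3⟩ := hE σ
  have tpos : 0 ≤ m1 S (fun _ => true) * m2 S (fun _ => true) := by
    unfold m1 m2
    have : (0 : ℝ) ≤ 1 := zero_le_one
    simp only [spin, if_true]
    positivity
  have t2 := t2 tpos
  simp only [Lbp, Lnbp, spin, if_true, mul_one, and_true] at t1 t2
  have A := abs_signed_sum_sub_le (fun ij : Fin N × Fin N => sim S ij.1 ij.2)
    (fun ij => ε ij.1 ij.2) (fun ij => spin (σ ij.1) * spin (σ ij.2))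
    (fun ij => spin_mul_eq _ _) hp.le hM t1 (Or.inl u1)
  have B := abs_signed_sum_sub_le (fun ij : Fin N × Fin N => ¬ sim S ij.1 ij.2)
    (fun ij => δ ij.1 ij.2) (fun ij => spin (σ ij.1) * spin (σ ij.2))
    (fun ij => spin_mul_eq _ _) hq.le hM t2
    ((le_or_gt 0 (m1 S σ * m2 S σ)).imp u2 u3)
  simp only [Fintype.sum_prod_type] at A B
  have C := abs_not_sim_sum_le S σ
  unfold Hdil Htilde
  generalize (∑ i, ∑ j, (if sim S i j then ε i j * (spin (σ i) * spin (σ j)) else 0)) = A1 at *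
  generalize (∑ i, ∑ j, (if ¬ sim S i j then δ i j * (spin (σ i) * spin (σ j)) else 0)) = B1 at *
  generalize (∑ i, ∑ j, (if sim S i j then (spin (σ i) * spin (σ j)) else 0)) = A0 at *
  generalize (∑ i, ∑ j, (if ¬ sim S i j then (spin (σ i) * spin (σ j)) else 0)) = B0 at *
  have e : -(β / (2 * N * p)) * A1 - (α / (2 * N * p)) * B1 -
      (-(β / (2 * N)) * A0 - (α * a / (2 * N)) * B0) =
      -(β / (2 * N * p) * (A1 - p * A0)) - (α / (2 * N * p) * (B1 - q * B0)
        + α / (2 * N) * ((q / p - a) * B0)) := by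
    field_simp
    ring
  rw [e]
  have k1 : |β / (2 * N * p) * (A1 - p * A0)| ≤ β / (2 * N * p) * (3 * |γ| * p * (N : ℝ) ^ 2) := by
    rw [abs_mul, abs_of_pos (by positivity : 0 < β / (2 * N * p))]
    gcongr
  have k2 : |α / (2 * N * p) * (B1 - q * B0)| ≤
      |α| / (2 * N * p) * (3 * |κ| * q * (N : ℝ) ^ 2) := by
    rw [abs_mul, abs_div, abs_of_pos (by positivity : (0 : ℝ) < 2 * N * p)]
    gcongr
  have k3 : |α / (2 * N) * ((q / p - a) * B0)| ≤ |α| / (2 * N) * (|q / p - a| * (N : ℝ) ^ 2) := by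
    rw [abs_mul, abs_div, abs_of_pos (by positivity : (0 : ℝ) < 2 * N), abs_mul]
    gcongr
  have e2 : N * ((3 * β * |γ| + 3 * |α| * |κ| * (q / p) + |α| * |q / p - a|) / 2) =
      β / (2 * N * p) * (3 * |γ| * p * (N : ℝ) ^ 2) +
      (|α| / (2 * N * p) * (3 * |κ| * q * (N : ℝ) ^ 2) +
        |α| / (2 * N) * (|q / p - a| * (N : ℝ) ^ 2)) := by
    field_simp
    ring
  rw [e2]
  calc _ ≤ |-(β / (2 * N * p) * (A1 - p * A0))| + |α / (2 * N * p) * (B1 - q * B0)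
        + α / (2 * N) * ((q / p - a) * B0)| := abs_sub _ _
    _ ≤ _ := by
      rw [abs_neg]
      exact add_le_add k1 ((abs_add_le _ _).trans (add_le_add k2 k3))

/-! ### Exponential bounds for the fully connected model -/

section Laplace

variable {N n : ℕ} {S : Finset (Fin N)}

lemma card_compl_half (hN : N = 2 * n) (hS : S.card = n) : Sᶜ.card = n := by
  rw [Finset.card_compl, Fintype.card_fin, hS]; omega

lemma sum_eq_m1 (hn : 0 < n) (hN : N = 2 * n) (σ : Fin N → Bool) :
    ∑ i ∈ S, spin (σ i) = n * m1 S σ := by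
  have : (n : ℝ) ≠ 0 := by positivity
  have hN' : (N : ℝ) = 2 * n := by exact_mod_cast hN
  unfold m1
  rw [hN']
  field_simp

lemma sum_eq_m2 (hn : 0 < n) (hN : N = 2 * n) (σ : Fin N → Bool) :
    ∑ i ∈ Sᶜ, spin (σ i) = n * m2 S σ := by
  have : (n : ℝ) ≠ 0 := by positivity
  have hN' : (N : ℝ) = 2 * n := by exact_mod_cast hN
  unfold m2
  rw [hN']
  field_simp

lemma neg_Htilde_eq_m (hn : 0 < n) (hN : N = 2 * n) (lam β : ℝ) (σ : Fin N → Bool) :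
    -Htilde S lam β σ = n * ((β + lam) / 2 / 2 * (m1 S σ ^ 2 + m2 S σ ^ 2) -
      lam / 4 * (m1 S σ - m2 S σ) ^ 2) := by
  have : (n : ℝ) ≠ 0 := by positivity
  have hN' : (N : ℝ) = 2 * n := by exact_mod_cast hN
  rw [neg_Htilde_eq, sum_eq_m1 hn hN, sum_eq_m2 hn hN, hN']
  field_simp
  ring

lemma pow_two_cosh (n : ℕ) (t : ℝ) :
    (2 * Real.cosh t) ^ n = Real.exp (n * Real.log (2 * Real.cosh t)) := by
  have : 0 < 2 * Real.cosh t := by have := Real.cosh_pos t; positivity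
  rw [mul_comm (n : ℝ), ← Real.rpow_def_of_pos this, Real.rpow_natCast]

/-- Lower bound on the partition function. As `0 < λ ≤ β` makes `-H̃` a convex function of `(m₁, m₂)`,
it lies above its tangent plane at `(z, z)`, whose exponential sum is explicit. -/
lemma exp_le_partition (hn : 0 < n) (hN : N = 2 * n) (hS : S.card = n) {lam β : ℝ}
    (hlam : 0 < lam) (hle : lam ≤ β) (z : ℝ) :
    Real.exp (n * (2 * cwH ((β + lam) / 2) z)) ≤
      ∑ σ : Fin N → Bool, Real.exp (-Htilde S lam β σ) := by
  set b := (β + lam) / 2 with hb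
  have hn0 : (0 : ℝ) < n := by exact_mod_cast hn
  have h1 : ∀ σ : Fin N → Bool,
      Real.exp (-(n * (b * z ^ 2))) * Real.exp (b * z * ∑ i ∈ S, spin (σ i) +
        b * z * ∑ i ∈ Sᶜ, spin (σ i)) ≤ Real.exp (-Htilde S lam β σ) := by
    intro σ
    rw [← Real.exp_add, Real.exp_le_exp, neg_Htilde_eq_m hn hN, sum_eq_m1 hn hN,
      sum_eq_m2 hn hN, ← hb]
    generalize m1 S σ = x
    generalize m2 S σ = y
    have key : 0 ≤ b / 2 * ((x - z) ^ 2 + (y - z) ^ 2) - lam / 4 * (x - y) ^ 2 := by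
      have hbl : 0 ≤ b - lam := by rw [hb]; linarith
      have e : b / 2 * ((x - z) ^ 2 + (y - z) ^ 2) - lam / 4 * (x - y) ^ 2 =
          (b - lam) / 2 * ((x - z) ^ 2 + (y - z) ^ 2) +
            lam / 4 * ((x - z) + (y - z)) ^ 2 := by ring
      rw [e]
      positivity
    nlinarith [mul_nonneg hn0.le key]
  calc Real.exp (n * (2 * cwH b z))
      = ∑ σ : Fin N → Bool, Real.exp (-(n * (b * z ^ 2))) *
          Real.exp (b * z * ∑ i ∈ S, spin (σ i) + b * z * ∑ i ∈ Sᶜ, spin (σ i)) := by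
        rw [← Finset.mul_sum, sum_exp_blocks, hS, card_compl_half hN hS, pow_two_cosh,
          ← Real.exp_add, ← Real.exp_add]
        congr 1
        unfold cwH
        ring
    _ ≤ _ := Finset.sum_le_sum fun σ _ => h1 σ

/-- The `n + 1` possible magnetizations of a block of `n` spins. -/
def magGrid (n : ℕ) : Finset ℝ := (Finset.range (n + 1)).image fun k : ℕ => (2 * k - n : ℝ) / n

lemma card_magGrid_le (n : ℕ) : (magGrid n).card ≤ n + 1 :=
  Finset.card_image_le.trans (by simp)

lemma mean_mem_magGrid {F : Finset (Fin N)} (hn : 0 < n) (hF : F.card = n) (σ : Fin N → Bool)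
    {x : ℝ} (hx : ∑ i ∈ F, spin (σ i) = n * x) : x ∈ magGrid n := by
  have hn0 : (n : ℝ) ≠ 0 := by positivity
  refine Finset.mem_image.2 ⟨(F.filter fun i => σ i = true).card, ?_, ?_⟩
  · rw [Finset.mem_range, Nat.lt_succ_iff, ← hF]
    exact Finset.card_filter_le _ _
  · have h : ∑ i ∈ F, spin (σ i) = 2 * ((F.filter fun i => σ i = true).card : ℝ) - n := by
      have : ∀ i, spin (σ i) = 2 * (if σ i = true then 1 else 0) - 1 := by
        intro i; cases σ i <;> norm_num [spin]
      simp_rw [this]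
      rw [Finset.sum_sub_distrib, ← Finset.mul_sum, Finset.sum_boole, Finset.sum_const, hF]
      simp
    rw [← h, hx]
    field_simp

open Classical in
/-- Upper bound on the contribution of the magnetizations in `K`: for each value `(x, y)` of the
magnetization, the Chernoff bound with tilts `b x` and `b y` estimates the number of
configurations. -/
lemma restricted_partition_le (hn : 0 < n) (hN : N = 2 * n) (hS : S.card = n) {lam β R : ℝ}
    {K : Set (ℝ × ℝ)} (hR : ∀ x ∈ K, cwH ((β + lam) / 2) x.1 + cwH ((β + lam) / 2) x.2 -
      lam / 4 * (x.1 - x.2) ^ 2 ≤ R) :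
    ∑ σ : Fin N → Bool, (if (m1 S σ, m2 S σ) ∈ K then Real.exp (-Htilde S lam β σ) else 0) ≤
      (n + 1) ^ 2 * Real.exp (n * R) := by
  set b := (β + lam) / 2 with hb
  set G := (magGrid n ×ˢ magGrid n).filter fun x => x ∈ K with hG
  have hpt : ∀ σ : Fin N → Bool,
      (if (m1 S σ, m2 S σ) ∈ K then Real.exp (-Htilde S lam β σ) else 0) ≤
      ∑ x ∈ G, Real.exp (-(n * (b / 2 * (x.1 ^ 2 + x.2 ^ 2) + lam / 4 * (x.1 - x.2) ^ 2))) *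
        Real.exp (b * x.1 * ∑ i ∈ S, spin (σ i) + b * x.2 * ∑ i ∈ Sᶜ, spin (σ i)) := by
    intro σ
    split_ifs with h
    · have hmem : (m1 S σ, m2 S σ) ∈ G := by
        rw [hG, Finset.mem_filter, Finset.mem_product]
        exact ⟨⟨mean_mem_magGrid hn hS σ (sum_eq_m1 hn hN σ),
          mean_mem_magGrid hn (card_compl_half hN hS) σ (sum_eq_m2 hn hN σ)⟩, h⟩
      refine le_trans (le_of_eq ?_) (Finset.single_le_sum
        (f := fun x : ℝ × ℝ =>
          Real.exp (-(n * (b / 2 * (x.1 ^ 2 + x.2 ^ 2) + lam / 4 * (x.1 - x.2) ^ 2))) *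
          Real.exp (b * x.1 * ∑ i ∈ S, spin (σ i) + b * x.2 * ∑ i ∈ Sᶜ, spin (σ i)))
        (fun x _ => by positivity) hmem)
      simp only
      rw [← Real.exp_add, neg_Htilde_eq_m hn hN, sum_eq_m1 hn hN, sum_eq_m2 hn hN, ← hb]
      congr 1
      ring
    · exact Finset.sum_nonneg fun x _ => by positivity
  refine (Finset.sum_le_sum fun σ _ => hpt σ).trans ?_
  rw [Finset.sum_comm]
  have hterm : ∀ x ∈ G, ∑ σ : Fin N → Bool,
      Real.exp (-(n * (b / 2 * (x.1 ^ 2 + x.2 ^ 2) + lam / 4 * (x.1 - x.2) ^ 2))) *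
        Real.exp (b * x.1 * ∑ i ∈ S, spin (σ i) + b * x.2 * ∑ i ∈ Sᶜ, spin (σ i)) ≤
      Real.exp (n * R) := by
    intro x hx
    rw [← Finset.mul_sum, sum_exp_blocks, hS, card_compl_half hN hS, pow_two_cosh,
      pow_two_cosh, ← Real.exp_add, ← Real.exp_add, Real.exp_le_exp]
    have h := hR x (Finset.mem_filter.1 hx).2
    have h' := mul_le_mul_of_nonneg_left h (Nat.cast_nonneg (α := ℝ) n)
    refine le_trans (le_of_eq ?_) h'
    unfold cwH
    ring
  refine (Finset.sum_le_card_nsmul G _ _ hterm).trans ?_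
  rw [nsmul_eq_mul]
  have hcard : (G.card : ℝ) ≤ (n + 1) ^ 2 := by
    have h1 : G.card ≤ (n + 1) * (n + 1) := by
      refine (Finset.card_filter_le _ _).trans ?_
      rw [Finset.card_product]
      exact Nat.mul_le_mul (card_magGrid_le n) (card_magGrid_le n)
    rw [sq]
    exact_mod_cast h1
  gcongr

/-- A Hamiltonian within `Δ` of the fully connected one gives exponentially small probability to a
set on which the rate functional stays below its maximum by `c`, up to the factor `exp (2 Δ)`. -/
lemma gibbsProb_le (hn : 0 < n) (hN : N = 2 * n) (hS : S.card = n) {lam β c z Δ : ℝ}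
    (hlam : 0 < lam) (hle : lam ≤ β) {K : Set (ℝ × ℝ)}
    (hK : ∀ x ∈ K, cwH ((β + lam) / 2) x.1 + cwH ((β + lam) / 2) x.2 -
      lam / 4 * (x.1 - x.2) ^ 2 ≤ 2 * cwH ((β + lam) / 2) z - c)
    (H : (Fin N → Bool) → ℝ) (hH : ∀ σ, |H σ - Htilde S lam β σ| ≤ Δ) :
    gibbsProb H S K ≤ (n + 1) ^ 2 * Real.exp (2 * Δ - n * c) := by
  classical
  have hup := restricted_partition_le hn hN hS hK
  have hlow := exp_le_partition hn hN hS hlam hle z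
  set b := (β + lam) / 2 with hb
  have hnum : (∑ σ : Fin N → Bool, if (m1 S σ, m2 S σ) ∈ K then Real.exp (-H σ) else 0) ≤
      Real.exp Δ * ((n + 1) ^ 2 * Real.exp (n * (2 * cwH b z - c))) := by
    refine le_trans ?_ (mul_le_mul_of_nonneg_left hup (Real.exp_pos _).le)
    rw [Finset.mul_sum]
    refine Finset.sum_le_sum fun σ _ => ?_
    split_ifs
    · rw [← Real.exp_add, Real.exp_le_exp]
      linarith [(abs_le.1 (hH σ)).1]
    · simp
  have hden : Real.exp (-Δ) * Real.exp (n * (2 * cwH b z)) ≤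
      ∑ σ : Fin N → Bool, Real.exp (-H σ) := by
    refine le_trans (mul_le_mul_of_nonneg_left hlow (Real.exp_pos _).le) ?_
    rw [Finset.mul_sum]
    refine Finset.sum_le_sum fun σ _ => ?_
    rw [← Real.exp_add, Real.exp_le_exp]
    linarith [(abs_le.1 (hH σ)).2]
  have hpos : 0 < Real.exp (-Δ) * Real.exp (n * (2 * cwH b z)) := by positivity
  have hZ := hpos.trans_le hden
  unfold gibbsProb
  rw [div_le_iff₀ hZ]
  calc _ ≤ Real.exp Δ * ((n + 1) ^ 2 * Real.exp (n * (2 * cwH b z - c))) := by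
        convert hnum
    _ = (n + 1) ^ 2 * Real.exp (2 * Δ - n * c) *
        (Real.exp (-Δ) * Real.exp (n * (2 * cwH b z))) := by
        have : Real.exp Δ * Real.exp (n * (2 * cwH b z - c)) =
            Real.exp (2 * Δ - n * c) * (Real.exp (-Δ) * Real.exp (n * (2 * cwH b z))) := by
          rw [← Real.exp_add, ← Real.exp_add, ← Real.exp_add]
          congr 1
          ring
        linear_combination ((n : ℝ) + 1) ^ 2 * this
    _ ≤ _ := by gcongr

lemma abs_mean_le_one {F : Finset (Fin N)} (hn : 0 < n) (hF : F.card = n) (σ : Fin N → Bool)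
    {x : ℝ} (hx : ∑ i ∈ F, spin (σ i) = n * x) : |x| ≤ 1 := by
  have hn0 : (0 : ℝ) < n := by exact_mod_cast hn
  have h : |∑ i ∈ F, spin (σ i)| ≤ n := by
    calc _ ≤ ∑ i ∈ F, |spin (σ i)| := Finset.abs_sum_le_sum_abs _ _
      _ = n := by
        rw [Finset.sum_congr rfl (g := fun _ => (1 : ℝ)), Finset.sum_const, hF, nsmul_eq_mul,
          mul_one]
        intro i _
        rcases spin_eq (σ i) with h | h <;> simp [h]
  rw [hx, abs_mul, abs_of_pos hn0] at h
  exact le_of_mul_le_mul_left (by linarith) hn0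

end Laplace

/-! ### Symmetry under the global spin flip and averages -/

section Symmetry

variable {N : ℕ}

lemma m1_flip (S : Finset (Fin N)) (σ : Fin N → Bool) : m1 S (fun i => !σ i) = -m1 S σ := by
  simp [m1, spin_not]

lemma m2_flip (S : Finset (Fin N)) (σ : Fin N → Bool) : m2 S (fun i => !σ i) = -m2 S σ := by
  simp [m2, spin_not]

lemma Hdil_flip (S : Finset (Fin N)) (α β p : ℝ) (ε δ : Fin N → Fin N → ℝ) (σ : Fin N → Bool) :
    Hdil S α β p ε δ (fun i => !σ i) = Hdil S α β p ε δ σ := by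
  simp only [Hdil, spin_not, neg_mul_neg]

/-- Under a flip-invariant Gibbs measure a test function may be replaced by its even part. -/
lemma gibbsAvg_eq_even (S : Finset (Fin N)) (H : (Fin N → Bool) → ℝ)
    (hH : ∀ σ, H (fun i => !σ i) = H σ) (f : ℝ × ℝ → ℝ) :
    gibbsAvg H (fun σ => f (m1 S σ, m2 S σ)) =
      gibbsAvg H (fun σ => (f (m1 S σ, m2 S σ) + f (-(m1 S σ, m2 S σ))) / 2) := by
  have hinv : Function.Involutive (fun (σ : Fin N → Bool) i => !σ i) := fun σ => by
    funext i; simp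
  have h : ∑ σ : Fin N → Bool, Real.exp (-H σ) * f (-(m1 S σ, m2 S σ)) =
      ∑ σ : Fin N → Bool, Real.exp (-H σ) * f (m1 S σ, m2 S σ) := by
    rw [← Equiv.sum_comp hinv.toPerm (fun σ => Real.exp (-H σ) * f (m1 S σ, m2 S σ))]
    refine Finset.sum_congr rfl fun σ _ => ?_
    simp only [Function.Involutive.coe_toPerm, hH, m1_flip, m2_flip, Prod.neg_mk]
  unfold gibbsAvg
  congr 1
  have e : ∀ σ : Fin N → Bool,
      Real.exp (-H σ) * ((f (m1 S σ, m2 S σ) + f (-(m1 S σ, m2 S σ))) / 2) =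
      (1 / 2) * (Real.exp (-H σ) * f (m1 S σ, m2 S σ)) +
        (1 / 2) * (Real.exp (-H σ) * f (-(m1 S σ, m2 S σ))) := fun σ => by ring
  simp_rw [e]
  rw [Finset.sum_add_distrib, ← Finset.mul_sum, ← Finset.mul_sum, h]
  ring

/-- A Gibbs average is within `e` of `L`, up to the probability of the exceptional set. -/
lemma abs_gibbsAvg_sub_le (S : Finset (Fin N)) (H : (Fin N → Bool) → ℝ)
    (g : (Fin N → Bool) → ℝ) {L e B : ℝ} (K : Set (ℝ × ℝ)) (he : 0 ≤ e)
    (hin : ∀ σ, (m1 S σ, m2 S σ) ∈ K → |g σ - L| ≤ B)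
    (hout : ∀ σ, (m1 S σ, m2 S σ) ∉ K → |g σ - L| ≤ e) :
    |gibbsAvg H g - L| ≤ e + B * gibbsProb H S K := by
  classical
  have hZ : 0 < ∑ σ : Fin N → Bool, Real.exp (-H σ) :=
    Finset.sum_pos (fun σ _ => Real.exp_pos _) Finset.univ_nonempty
  have e1 : gibbsAvg H g - L =
      (∑ σ : Fin N → Bool, Real.exp (-H σ) * (g σ - L)) / ∑ σ : Fin N → Bool, Real.exp (-H σ) := by
    unfold gibbsAvg
    rw [eq_div_iff hZ.ne', sub_mul, div_mul_cancel₀ _ hZ.ne']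
    simp_rw [mul_sub]
    rw [Finset.sum_sub_distrib, ← Finset.sum_mul]
    ring
  have e2 : e + B * gibbsProb H S K =
      (∑ σ : Fin N → Bool, (Real.exp (-H σ) * e +
        B * (if (m1 S σ, m2 S σ) ∈ K then Real.exp (-H σ) else 0))) /
        ∑ σ : Fin N → Bool, Real.exp (-H σ) := by
    unfold gibbsProb
    rw [eq_div_iff hZ.ne', add_mul, mul_assoc, div_mul_cancel₀ _ hZ.ne', Finset.sum_add_distrib,
      ← Finset.sum_mul, ← Finset.mul_sum, mul_comm e]
  rw [e1, e2, abs_div, abs_of_pos hZ]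
  gcongr
  refine (Finset.abs_sum_le_sum_abs _ _).trans (Finset.sum_le_sum fun σ _ => ?_)
  rw [abs_mul, abs_of_pos (Real.exp_pos _)]
  have hpos := Real.exp_pos (-H σ)
  split_ifs with h
  · have := mul_le_mul_of_nonneg_left (hin σ h) hpos.le
    have := mul_nonneg hpos.le he
    linarith
  · have := mul_le_mul_of_nonneg_left (hout σ h) hpos.le
    linarith

end Symmetry

end

/-- phase `β + αa > 2`, `αa > 0`: on `E_N^*` the group opinion vector under the
diluted Gibbs measure converges weakly to the mixture of the two Dirac measures at
`±(z*((β+αa)/2), z*((β+αa)/2))`. -/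
theorem diluted_weak_limit_ferromagnetic
    (β α : ℝ) (hβ : 0 < β) (p q γ κ : ℕ → ℝ) (a : ℝ)
    (S : ∀ N : ℕ, Finset (Fin N)) (hS : ∀ N, Even N → (S N).card = N / 2)
    (hq0 : ∀ N, Even N → 0 < q N) (hqp : ∀ N, Even N → q N ≤ p N)
    (hp1 : ∀ N, Even N → p N ≤ 1)
    (hNp : Filter.Tendsto (fun N : ℕ => (N : ℝ) * p N) evenAtTop Filter.atTop)
    (ha : Filter.Tendsto (fun N : ℕ => q N / p N) evenAtTop (nhds a))
    (hαa : |α| * a ≤ β)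
    (hγ : Filter.Tendsto γ evenAtTop (nhds 0)) (hκ : Filter.Tendsto κ evenAtTop (nhds 0))
    (ε δ : ∀ N : ℕ, Fin N → Fin N → ℝ)
    (hε : ∀ N i j, ε N i j = 0 ∨ ε N i j = 1) (hδ : ∀ N i j, δ N i j = 0 ∨ δ N i j = 1)
    (hE : ∀ N, Even N → Estar (S N) (γ N) (κ N) (p N) (q N) (ε N) (δ N))
    (ha0 : 0 < a) (ha1 : a ≤ 1)
    (hcrit : 2 < β + α * a) (hpos : 0 < α * a) :
    ∀ z : ℝ, IsLargestCW ((β + α * a) / 2) z →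
      ∀ f : ℝ × ℝ → ℝ, IsBddCont f →
        Filter.Tendsto
          (fun N : ℕ => gibbsAvg (Hdil (S N) α β (p N) (ε N) (δ N))
            fun σ => f (m1 (S N) σ, m2 (S N) σ))
          evenAtTop (nhds ((1 / 2) * (f (z, z) + f (-z, -z)))) := by
  intro z hz f hf
  obtain ⟨hfc, M, hM⟩ := hf
  have hα : 0 < α := pos_of_mul_pos_left hpos ha0.le
  have hle : α * a ≤ β := by rwa [abs_of_pos hα] at hαa
  have hb : 1 < (β + α * a) / 2 := by linarith
  have hM0 : 0 ≤ M := (abs_nonneg _).trans (hM (0, 0))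
  set L := (1 / 2) * (f (z, z) + f (-z, -z)) with hL
  set φ : ℝ × ℝ → ℝ := fun x => (f x + f (-x)) / 2 with hφ
  have hφc : Continuous φ := by fun_prop
  have hφM : ∀ x, |φ x - L| ≤ 2 * M := by
    intro x
    have i1 := abs_le.1 (hM x)
    have i2 := abs_le.1 (hM (-x))
    have i3 := abs_le.1 (hM (z, z))
    have i4 := abs_le.1 (hM (-z, -z))
    simp only [hφ, hL]
    rw [abs_le]
    constructor <;> linarith [i1.1, i1.2, i2.1, i2.2, i3.1, i3.2, i4.1, i4.2]
  rw [Metric.tendsto_nhds]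
  intro e he
  -- The exceptional set: magnetizations at which the even part of `f` is far from the limit.
  set K : Set (ℝ × ℝ) :=
    (Set.Icc (-1 : ℝ) 1 ×ˢ Set.Icc (-1 : ℝ) 1) ∩ {x | e / 2 ≤ |φ x - L|} with hKdef
  have hK : IsCompact K := by
    refine (isCompact_Icc.prod isCompact_Icc).inter_right ?_
    exact isClosed_le continuous_const (by fun_prop)
  have hz1 : (z, z) ∉ K := by
    rintro ⟨-, h⟩
    have h : e / 2 ≤ |φ (z, z) - L| := h
    have h0 : φ (z, z) - L = 0 := by simp only [hφ, hL, Prod.neg_mk]; ring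
    rw [h0, abs_zero] at h
    linarith
  have hz2 : (-z, -z) ∉ K := by
    rintro ⟨-, h⟩
    have h : e / 2 ≤ |φ (-z, -z) - L| := h
    have h0 : φ (-z, -z) - L = 0 := by simp only [hφ, hL, Prod.neg_mk, neg_neg]; ring
    rw [h0, abs_zero] at h
    linarith
  obtain ⟨c, hc, hgap⟩ := exists_gap hb hpos hz hK hz1 hz2
  set ρ : ℕ → ℝ := fun N =>
    (3 * β * |γ N| + 3 * |α| * |κ N| * (q N / p N) + |α| * |q N / p N - a|) / 2 with hρ
  have hρ0 : Filter.Tendsto ρ evenAtTop (nhds 0) := by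
    have t1 := (hγ.abs.const_mul (3 * β))
    have t2 := (hκ.abs.const_mul (3 * |α|)).mul ha
    have t3 := ((ha.sub_const a).abs.const_mul |α|)
    have := ((t1.add t2).add t3).div_const 2
    simpa using this
  have hle_top : evenAtTop ≤ (Filter.atTop : Filter ℕ) := inf_le_left
  have heven : ∀ᶠ N in evenAtTop, Even N := by
    rw [evenAtTop, Filter.eventually_inf_principal]
    exact Filter.Eventually.of_forall fun N h => h
  have hsmall : Filter.Tendsto
      (fun N : ℕ => 2 * M * (((N : ℝ) + 1) ^ 2 * Real.exp (-(c / 4) * N))) evenAtTop (nhds 0) := by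
    have k := fun m : ℕ =>
      (Real.summable_pow_mul_exp_neg_nat_mul m (show 0 < c / 4 by positivity)).tendsto_atTop_zero
    have h0 : Filter.Tendsto (fun N : ℕ => ((N : ℝ) + 1) ^ 2 * Real.exp (-(c / 4) * N))
        Filter.atTop (nhds 0) := by
      have h := ((k 2).add ((k 1).const_mul 2)).add (k 0)
      simp only [mul_zero, add_zero] at h
      refine h.congr fun N => ?_
      ring
    have h1 := h0.mono_left hle_top
    simpa using h1.const_mul (2 * M)
  filter_upwards [heven, hle_top (Filter.eventually_gt_atTop 0),
    hρ0.eventually (gt_mem_nhds (show (0 : ℝ) < c / 16 by positivity)),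
    hsmall.eventually (gt_mem_nhds (show (0 : ℝ) < e / 2 by positivity))] with N hev hNpos hρN hsm
  obtain ⟨n, hn⟩ := hev
  have hN : N = 2 * n := by omega
  have hn0 : 0 < n := by omega
  have hcard : (S N).card = n := by rw [hS N ⟨n, hn⟩]; omega
  have hNr : (N : ℝ) = 2 * n := by exact_mod_cast hN
  have hnr : (0 : ℝ) < n := by exact_mod_cast hn0
  have hev : Even N := ⟨n, hn⟩
  have hprob := gibbsProb_le hn0 hN hcard hpos hle hgap
    (Hdil (S N) α β (p N) (ε N) (δ N))
    (fun σ => abs_Hdil_sub_Htilde_le (a := a) hNpos (S N) hβ (hq0 N hev) (hqp N hev) (ε N) (δ N)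
      (hE N hev) σ)
  have hprob' : gibbsProb (Hdil (S N) α β (p N) (ε N) (δ N)) (S N) K ≤
      ((N : ℝ) + 1) ^ 2 * Real.exp (-(c / 4) * N) := by
    refine hprob.trans ?_
    change ((n : ℝ) + 1) ^ 2 * Real.exp (2 * (N * ρ N) - n * c) ≤ _
    have h2 : 2 * (N * ρ N) - n * c ≤ -(c / 4) * N := by
      rw [hNr]
      nlinarith [mul_lt_mul_of_pos_left hρN hnr]
    have h3 : (n : ℝ) + 1 ≤ N + 1 := by linarith
    gcongr
  rw [gibbsAvg_eq_even (S N) _ (fun σ => Hdil_flip _ _ _ _ _ _ σ) f, Real.dist_eq]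
  have hbd := abs_gibbsAvg_sub_le (S N) (Hdil (S N) α β (p N) (ε N) (δ N))
    (fun σ => φ (m1 (S N) σ, m2 (S N) σ)) (L := L) (e := e / 2) (B := 2 * M) K
    (by positivity) (fun σ _ => hφM _) (fun σ hσ => by
      by_contra hcon
      refine hσ ⟨⟨?_, ?_⟩, (not_le.1 hcon).le⟩
      · exact abs_le.1 (abs_mean_le_one hn0 hcard σ (sum_eq_m1 hn0 hN σ))
      · exact abs_le.1 (abs_mean_le_one hn0 (card_compl_half hN hcard) σ (sum_eq_m2 hn0 hN σ)))
  have := mul_le_mul_of_nonneg_left hprob' (show 0 ≤ 2 * M by positivity)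
  refine lt_of_le_of_lt hbd ?_
  linarith
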